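/- arXiv:1407.6563 — 2 statements merged into one kernel-verified Lean document; each statement's English description precedes it below -/
import Mathlib

section
/- Let H be a real Hilbert space, E a real normed space, and T : H → E an injective compact continuous linear operator. Let a ≤ b be real numbers and let f : [a,b] → H be a function whose range is norm-bounded in H and such that the composition T ∘ f : [a,b] → E is continuous. Then f is weakly continuous, i.e. f is continuous from [a,b] into H equipped with its weak topology. -/
/-!
For `y : H`, consider the scalar path `t ↦ ⟪y, f t⟫`. The vectors `y` for which it is continuous form
a subspace of `H`. Since `f` is bounded, `y ↦ ⟪y, f ·⟫` is Lipschitz for the uniform norm, and uniform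
limits of continuous functions are continuous, so this subspace is closed. It contains the Riesz
representative of `ℓ ∘ T` for every `ℓ` in the dual of `E`, as `⟪y, f t⟫ = ℓ (T (f t))` for this `y`.
A vector orthogonal to all of these representatives is sent by `T` to a vector annihilated by the
whole dual of `E`, hence to `0` by Hahn–Banach, and so vanishes by injectivity. The subspace is thus
closed and dense, that is, all of `H`; by the Riesz theorem this is weak continuity of `f`.
-/

/-- The subspace of those `y : H` against which the path `f` is continuous. -/
def continuousTestVectors {X H : Type*} [TopologicalSpace X] [NormedAddCommGroup H]
    [InnerProductSpace ℝ H] (f : X → H) : Submodule ℝ H where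
  carrier := {y | Continuous fun t => inner ℝ y (f t)}
  zero_mem' := by simpa using continuous_const
  add_mem' {y z} hy hz := by
    change Continuous fun t => inner ℝ (y + z) (f t)
    simp only [inner_add_left]
    exact Continuous.add hy hz
  smul_mem' c y hy := by
    change Continuous fun t => inner ℝ (c • y) (f t)
    simp only [real_inner_smul_left]
    exact Continuous.const_mul hy c

theorem isClosed_continuousTestVectors {X H : Type*} [TopologicalSpace X] [NormedAddCommGroup H]
    [InnerProductSpace ℝ H] (f : X → H) (hbd : ∃ M : ℝ, ∀ t, ‖f t‖ ≤ M) :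
    IsClosed (continuousTestVectors f : Set H) := by
  obtain ⟨M, hM⟩ := hbd
  refine isClosed_of_closure_subset fun y hy => ?_
  change Continuous fun t => inner ℝ y (f t)
  refine continuous_of_uniform_approx_of_continuous fun u hu => ?_
  obtain ⟨ε, hε, hεu⟩ := Metric.mem_uniformity_dist.1 hu
  -- `|M| + 1` serves as a strictly positive bound for `f`.
  have hK : 0 < |M| + 1 := by positivity
  obtain ⟨z, hz, hyz⟩ := Metric.mem_closure_iff.1 hy (ε / (|M| + 1)) (by positivity)
  refine ⟨fun t => inner ℝ z (f t), hz, fun t => hεu ?_⟩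
  rw [dist_eq_norm, lt_div_iff₀ hK] at hyz
  rw [Real.dist_eq, ← inner_sub_left]
  calc |inner ℝ (y - z) (f t)| ≤ ‖y - z‖ * ‖f t‖ := abs_real_inner_le_norm _ _
    _ ≤ ‖y - z‖ * (|M| + 1) := by
      gcongr
      linarith [hM t, le_abs_self M]
    _ < ε := hyz

/-- If `T` is injective, continuity of `T ∘ f` provides a dense subspace of test vectors: the Riesz
representatives of the functionals `ℓ ∘ T` have trivial orthogonal complement. -/
theorem continuousTestVectors_orthogonal_eq_bot {X H E : Type*} [TopologicalSpace X]
    [NormedAddCommGroup H] [InnerProductSpace ℝ H] [CompleteSpace H]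
    [NormedAddCommGroup E] [NormedSpace ℝ E]
    (T : H →L[ℝ] E) (hTinj : Function.Injective T) (f : X → H)
    (hcont : Continuous fun t => T (f t)) :
    (continuousTestVectors f)ᗮ = ⊥ := by
  refine (Submodule.eq_bot_iff _).2 fun x hx => hTinj ?_
  rw [map_zero]
  refine SeparatingDual.eq_zero_of_forall_dual_eq_zero (R := ℝ) fun ℓ => ?_
  have hmem : (InnerProductSpace.toDual ℝ H).symm (ℓ ∘L T) ∈ continuousTestVectors f := by
    change Continuous fun t => inner ℝ ((InnerProductSpace.toDual ℝ H).symm (ℓ ∘L T)) (f t)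
    simp only [InnerProductSpace.toDual_symm_apply]
    exact ℓ.continuous.comp hcont
  simpa only [InnerProductSpace.toDual_symm_apply, ContinuousLinearMap.comp_apply] using
    (Submodule.mem_orthogonal _ _).1 hx _ hmem

/-- If `T : H → E` is an injective compact continuous linear operator from a real Hilbert space
to a normed space, `f : [a,b] → H` has norm-bounded range and `T ∘ f` is continuous, then `f`
is continuous into `H` equipped with its weak topology. -/
theorem stmt_1 {H E : Type*} [NormedAddCommGroup H] [InnerProductSpace ℝ H] [CompleteSpace H]
    [NormedAddCommGroup E] [NormedSpace ℝ E]
    (T : H →L[ℝ] E) (hTinj : Function.Injective T) (hTcpt : IsCompactOperator T)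
    (a b : ℝ) (hab : a ≤ b) (f : Set.Icc a b → H)
    (hbd : ∃ M : ℝ, ∀ t, ‖f t‖ ≤ M)
    (hcont : Continuous fun t => T (f t)) :
    Continuous fun t => toWeakSpace ℝ H (f t) := by
  have htop : continuousTestVectors f = ⊤ := by
    rw [← (isClosed_continuousTestVectors f hbd).submodule_topologicalClosure_eq,
      Submodule.topologicalClosure_eq_top_iff]
    exact continuousTestVectors_orthogonal_eq_bot T hTinj f hcont
  refine WeakBilin.continuous_of_continuous_eval _ fun φ => ?_
  have hφ : (InnerProductSpace.toDual ℝ H).symm φ ∈ continuousTestVectors f :=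
    htop ▸ Submodule.mem_top
  change Continuous fun t => inner ℝ ((InnerProductSpace.toDual ℝ H).symm φ) (f t) at hφ
  simp only [InnerProductSpace.toDual_symm_apply] at hφ
  exact hφ
end

section
/- Let H be a real Hilbert space, E a real normed space, and T : H → E an injective compact continuous linear operator. Let a ≤ b be real numbers and f : [a,b] → H a function. Then the following are equivalent: (i) the range of f is norm-bounded in H and T ∘ f : [a,b] → E is continuous; (ii) the range of f is norm-bounded in H and f is weakly continuous, i.e. continuous into H equipped with its weak topology. -/
/-!
For the forward direction, the vectors `x : H` for which `t ↦ ⟪x, f t⟫` is continuous form a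
subspace, which is closed because `f` is norm-bounded (uniform limits of continuous functions are
continuous). It contains the Riesz representative of `φ ∘ T` for every continuous functional `φ`
on `E`, so a vector `v` orthogonal to it satisfies `φ (T v) = 0` for all `φ`, hence `T v = 0` and
`v = 0` by injectivity. The subspace is therefore all of `H`.

For the converse, `T ∘ f` is weakly continuous and takes values in a compact subset of `E`, the
norm compactness coming from compactness of `T`. Any norm cluster point of `T ∘ f` at `t₀` is
also a weak cluster point, so it equals `T (f t₀)` because functionals separate points; in a
compact set, uniqueness of the cluster point gives convergence.
-/

open Filter Topology

theorem continuous_toWeakSpace_iff {X H : Type*} [TopologicalSpace X] [NormedAddCommGroup H]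
    [NormedSpace ℝ H] (f : X → H) :
    (Continuous fun t => toWeakSpace ℝ H (f t)) ↔
      ∀ φ : H →L[ℝ] ℝ, Continuous fun t => φ (f t) := by
  constructor
  · intro h φ
    exact (WeakBilin.eval_continuous (topDualPairing ℝ H).flip φ).comp h
  · intro h
    exact WeakBilin.continuous_of_continuous_eval (topDualPairing ℝ H).flip h

/-- The vectors whose inner product with a fixed norm-bounded function is continuous form a
closed set. -/
theorem isClosed_setOf_continuous_inner {X H : Type*} [TopologicalSpace X]
    [NormedAddCommGroup H] [InnerProductSpace ℝ H] (f : X → H) {M : ℝ} (hM : ∀ t, ‖f t‖ ≤ M) :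
    IsClosed {x : H | Continuous fun t => inner ℝ x (f t)} := by
  refine isClosed_of_closure_subset fun x hx => ?_
  refine continuous_of_uniform_approx_of_continuous fun u hu => ?_
  obtain ⟨ε, hε, hεu⟩ := Metric.mem_uniformity_dist.1 hu
  have hM1 : 0 < |M| + 1 := by positivity
  obtain ⟨y, hy, hxy⟩ := Metric.mem_closure_iff.1 hx (ε / (|M| + 1)) (by positivity)
  refine ⟨_, hy, fun t => hεu ?_⟩
  rw [Real.dist_eq, ← inner_sub_left]
  rw [dist_eq_norm, lt_div_iff₀ hM1] at hxy
  calc |inner ℝ (x - y) (f t)| ≤ ‖x - y‖ * ‖f t‖ := abs_real_inner_le_norm _ _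
    _ ≤ ‖x - y‖ * (|M| + 1) := by
        gcongr
        linarith [hM t, le_abs_self M]
    _ < ε := hxy

theorem continuous_inner_of_continuous_comp {X H E : Type*} [TopologicalSpace X]
    [NormedAddCommGroup H] [InnerProductSpace ℝ H] [CompleteSpace H]
    [NormedAddCommGroup E] [NormedSpace ℝ E]
    (T : H →L[ℝ] E) (hT : Function.Injective T) (f : X → H) {M : ℝ} (hM : ∀ t, ‖f t‖ ≤ M)
    (hf : Continuous fun t => T (f t)) (x : H) : Continuous fun t => inner ℝ x (f t) := by
  let K : Submodule ℝ H :=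
    { carrier := {x : H | Continuous fun t => inner ℝ x (f t)}
      add_mem' := fun {x y} hx hy => by
        simpa only [Set.mem_ofPred_eq, inner_add_left] using Continuous.fun_add hx hy
      zero_mem' := by simpa using continuous_const
      smul_mem' := fun c x hx => by
        simpa only [Set.mem_ofPred_eq, real_inner_smul_left] using
          Continuous.fun_mul continuous_const hx }
  have hKc : IsClosed (K : Set H) := isClosed_setOf_continuous_inner f hM
  have : CompleteSpace K := hKc.completeSpace_coe
  have hK : K = ⊤ := by
    rw [← Submodule.orthogonal_eq_bot_iff, Submodule.eq_bot_iff]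
    intro v hv
    refine hT ?_
    rw [map_zero]
    refine SeparatingDual.eq_zero_of_forall_dual_eq_zero (R := ℝ) fun φ => ?_
    have hmem : (InnerProductSpace.toDual ℝ H).symm (φ.comp T) ∈ K := by
      change Continuous fun t => inner ℝ ((InnerProductSpace.toDual ℝ H).symm (φ.comp T)) (f t)
      simp only [InnerProductSpace.toDual_symm_apply]
      exact φ.continuous.comp hf
    simpa using (Submodule.mem_orthogonal K v).1 hv _ hmem
  have hx : x ∈ K := hK ▸ Submodule.mem_top
  exact hx

/-- A weakly continuous function with values in a norm-compact set is norm continuous. -/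
theorem continuous_of_forall_dual_of_isCompact {X E : Type*} [TopologicalSpace X]
    [NormedAddCommGroup E] [NormedSpace ℝ E] {K : Set E} (hK : IsCompact K) (g : X → E)
    (hgK : ∀ t, g t ∈ K) (hg : ∀ φ : E →L[ℝ] ℝ, Continuous fun t => φ (g t)) :
    Continuous g := by
  refine continuous_iff_continuousAt.2 fun t₀ => ?_
  refine hK.tendsto_nhds_of_unique_mapClusterPt (Eventually.of_forall hgK) fun y _ hy => ?_
  refine (SeparatingDual.eq_iff_forall_dual_eq (R := ℝ)).2 fun φ => ?_
  have hφ : MapClusterPt (φ y) (𝓝 t₀) (φ ∘ g) := hy.continuousAt_comp φ.continuous.continuousAt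
  have := hφ.clusterPt.mono ((hg φ).tendsto t₀)
  exact eq_of_nhds_neBot this

/-- For an injective compact continuous linear operator `T : H → E` from a real Hilbert space
to a normed space and `f : [a,b] → H`, the range of `f` is norm-bounded and `T ∘ f` is
continuous if and only if the range of `f` is norm-bounded and `f` is weakly continuous. -/
theorem stmt_3 {H E : Type*} [NormedAddCommGroup H] [InnerProductSpace ℝ H] [CompleteSpace H]
    [NormedAddCommGroup E] [NormedSpace ℝ E]
    (T : H →L[ℝ] E) (hTinj : Function.Injective T) (hTcpt : IsCompactOperator T)
    (a b : ℝ) (hab : a ≤ b) (f : Set.Icc a b → H) :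
    ((∃ M : ℝ, ∀ t, ‖f t‖ ≤ M) ∧ Continuous fun t => T (f t)) ↔
      ((∃ M : ℝ, ∀ t, ‖f t‖ ≤ M) ∧ Continuous fun t => toWeakSpace ℝ H (f t)) := by
  refine and_congr_right fun ⟨M, hM⟩ => ?_
  rw [continuous_toWeakSpace_iff]
  constructor
  · intro h φ
    simpa only [InnerProductSpace.toDual_symm_apply] using
      continuous_inner_of_continuous_comp T hTinj f hM h ((InnerProductSpace.toDual ℝ H).symm φ)
  · intro h
    obtain ⟨K, hK, hTK⟩ :=
      IsCompactOperator.image_closedBall_subset_compact (f := T.toLinearMap) hTcpt M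
    exact continuous_of_forall_dual_of_isCompact hK _
      (fun t => hTK ⟨f t, by simpa using hM t, rfl⟩) fun φ => h (φ.comp T)
end
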